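/- For m ≥ 1 and c = 1, the treewidth of the hardware graph F(m,1) equals exactly m. -/

import Mathlib

open SimpleGraph

/-- A tree decomposition of `G` with tree `T` and bags `B`. -/
def IsTreeDecomp {V I : Type} (G : SimpleGraph V) (T : SimpleGraph I)
    (B : I → Finset V) : Prop :=
  T.IsTree ∧
  (∀ v : V, ∃ i : I, v ∈ B i) ∧
  (∀ u v : V, G.Adj u v → ∃ i : I, u ∈ B i ∧ v ∈ B i) ∧
  (∀ v : V, (T.induce {i : I | v ∈ B i}).Connected)

/-- The treewidth of `G`: the least `k` such that `G` has a tree decomposition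
all of whose bags have at most `k + 1` vertices (i.e. width at most `k`). -/
noncomputable def treewidth {V : Type} (G : SimpleGraph V) : ℕ :=
  sInf {k : ℕ | ∃ (I : Type) (T : SimpleGraph I) (B : I → Finset V),
    IsTreeDecomp G T B ∧ ∀ i : I, (B i).card ≤ k + 1}

/-- `H` is a minor of `G`: branch sets are nonempty (connectedness includes
nonemptiness), induce connected subgraphs, are pairwise disjoint, and every
edge of `H` is realized by an edge of `G` between the corresponding branch sets. -/
def IsMinor {V W : Type} (H : SimpleGraph V) (G : SimpleGraph W) : Prop :=
  ∃ φ : V → Set W,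
    (∀ v : V, (G.induce (φ v)).Connected) ∧
    (∀ u v : V, u ≠ v → Disjoint (φ u) (φ v)) ∧
    (∀ u v : V, H.Adj u v → ∃ a ∈ φ u, ∃ b ∈ φ v, G.Adj a b)

/-- The `n × m` two-dimensional grid graph: vertices `(i, j)` are adjacent iff
they differ by exactly 1 in one coordinate and agree in the other. -/
def gridGraph (n m : ℕ) : SimpleGraph (Fin n × Fin m) :=
  SimpleGraph.fromRel (fun p q =>
    (p.1 = q.1 ∧ p.2.val + 1 = q.2.val) ∨ (p.2 = q.2 ∧ p.1.val + 1 = q.1.val))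

/-- The hardware graph `F(m, c)`: an `m × m` grid of `K_{c,c}` unit cells.
A vertex `(a, b, d)` lies in cell `(a, b)`; it is on the left half if `d < c`
and the right half otherwise.  Left and right halves of a cell are completely
joined; left-half vertices are joined to their images in the cell directly
below; right-half vertices are joined to their images in the cell to the right. -/
def hardwareGraph (m c : ℕ) : SimpleGraph (Fin m × Fin m × Fin (2 * c)) :=
  SimpleGraph.fromRel (fun x y =>
    (x.1 = y.1 ∧ x.2.1 = y.2.1 ∧ x.2.2.val < c ∧ c ≤ y.2.2.val) ∨
    (x.2.1 = y.2.1 ∧ x.2.2 = y.2.2 ∧ x.2.2.val < c ∧ x.1.val + 1 = y.1.val) ∨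
    (x.1 = y.1 ∧ x.2.2 = y.2.2 ∧ c ≤ x.2.2.val ∧ x.2.1.val + 1 = y.2.1.val))

namespace SimpleGraph

/-! ### Rooted trees given by a parent function -/

section Parent

variable {I : Type} (p : I → I)

/-- The graph joining every `i` to its parent `p i`. -/
def parentGraph : SimpleGraph I :=
  SimpleGraph.fromRel fun i j => p i = j

variable {p}

/-- A set of nodes with a top element `t` which contains with every other node also its parent
induces a connected subgraph of the parent graph. -/
lemma connected_induce_parentGraph {ρ : I → ℕ} {S : Set I} {t : I} (ht : t ∈ S)
    (h : ∀ i ∈ S, i ≠ t → p i ∈ S ∧ ρ (p i) < ρ i) :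
    ((parentGraph p).induce S).Connected := by
  have key : ∀ n, ∀ i (hi : i ∈ S), ρ i = n →
      ((parentGraph p).induce S).Reachable ⟨i, hi⟩ ⟨t, ht⟩ := by
    intro n
    induction n using Nat.strong_induction_on with
    | _ n ih =>
      intro i hi hn
      by_cases hit : i = t
      · subst hit
        exact Reachable.refl _
      · obtain ⟨hp, hlt⟩ := h i hi hit
        refine Reachable.trans (Adj.reachable ?_) (ih _ (hn ▸ hlt) (p i) hp rfl)
        have hne : i ≠ p i := fun he => by rw [← he] at hlt; exact lt_irrefl _ hlt
        simpa [parentGraph] using hne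
  rw [connected_iff]
  exact ⟨fun x y => (key _ x.1 x.2 rfl).trans (key _ y.1 y.2 rfl).symm, ⟨⟨t, ht⟩⟩⟩

lemma isTree_parentGraph [Finite I] {ρ : I → ℕ} {r : I} (hr : p r = r)
    (h : ∀ i, i ≠ r → ρ (p i) < ρ i) : (parentGraph p).IsTree := by
  classical
  have hconn : (parentGraph p).Connected :=
    (induceUnivIso _).connected_iff.1 <|
      connected_induce_parentGraph (Set.mem_univ r) fun i _ hi => ⟨Set.mem_univ _, h i hi⟩
  refine isTree_iff_connected_and_card.2 ⟨hconn, le_antisymm ?_ ?_⟩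
  · have hsub : (parentGraph p).edgeSet ⊆ (fun i => s(i, p i)) '' {r}ᶜ := by
      intro e
      induction e using Sym2.ind with
      | _ x y =>
        intro he
        rw [mem_edgeSet, parentGraph, fromRel_adj] at he
        obtain ⟨hne, rfl | rfl⟩ := he
        · exact ⟨x, fun hx => hne (by rw [Set.mem_singleton_iff.1 hx, hr]), rfl⟩
        · exact ⟨y, fun hx => hne (by rw [Set.mem_singleton_iff.1 hx, hr]), Sym2.eq_swap⟩
    have h1 := (Set.ncard_le_ncard hsub (Set.toFinite _)).trans
      (Set.ncard_image_le (Set.toFinite _))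
    have h2 := Set.ncard_add_ncard_compl ({r} : Set I)
    rw [Set.ncard_singleton] at h2
    rw [Nat.card_coe_set_eq]
    omega
  · exact hconn.card_vert_le_card_edgeSet_add_one

end Parent

/-! ### The Helly property of subtrees -/

section Helly

variable {I : Type} {T : SimpleGraph I}

/-- A set of nodes is path-convex if it contains every path between two of its elements. -/
def IsPathConvex (T : SimpleGraph I) (S : Set I) : Prop :=
  ∀ ⦃u v : I⦄ (p : T.Walk u v), p.IsPath → u ∈ S → v ∈ S → ∀ w ∈ p.support, w ∈ S

lemma IsPathConvex.inter {A B : Set I} (hA : T.IsPathConvex A) (hB : T.IsPathConvex B) :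
    T.IsPathConvex (A ∩ B) := fun _ _ p hp hu hv w hw =>
  ⟨hA p hp hu.1 hv.1 w hw, hB p hp hu.2 hv.2 w hw⟩

lemma IsAcyclic.isPathConvex (hT : T.IsAcyclic) {S : Set I} (hS : (T.induce S).Preconnected) :
    T.IsPathConvex S := by
  classical
  intro u v p hp hu hv w hw
  obtain ⟨q⟩ := hS ⟨u, hu⟩ ⟨v, hv⟩
  have hpath : (q.bypass.map (Embedding.induce S).toHom).IsPath :=
    q.bypass_isPath.map (Embedding.induce (G := T) S).injective
  have hsupp : ∀ w ∈ (q.bypass.map (Embedding.induce S).toHom).support, w ∈ S := fun w hw => by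
    rw [Walk.support_map] at hw
    obtain ⟨x, -, rfl⟩ := List.mem_map.1 hw
    exact x.2
  have heq : p = q.bypass.map (Embedding.induce S).toHom :=
    congrArg Subtype.val ((hT.subsingleton_path u v).elim ⟨p, hp⟩ ⟨_, hpath⟩)
  rw [heq] at hw
  exact hsupp w hw

/-- If each edge of a walk from `A` to `C` lies inside `A` or inside `C`, then the walk passes
through `A ∩ C`. -/
lemma Walk.exists_mem_support_inter {A C : Set I} {x y : I} (p : T.Walk x y)
    (hx : x ∈ A) (hy : y ∈ C)
    (h : ∀ u v, s(u, v) ∈ p.edges → (u ∈ A ∧ v ∈ A) ∨ (u ∈ C ∧ v ∈ C)) :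
    ∃ w ∈ p.support, w ∈ A ∧ w ∈ C := by
  induction p with
  | nil => exact ⟨_, by simp, hx, hy⟩
  | @cons u v w huv p ih =>
    rcases h u v (by simp) with ⟨-, hv⟩ | ⟨hu, -⟩
    · obtain ⟨z, hz, hzAC⟩ := ih hv hy fun a b hab => h a b (by simp [hab])
      exact ⟨z, by simp [hz], hzAC⟩
    · exact ⟨u, by simp, hx, hu⟩

lemma IsTree.nonempty_inter_of_isPathConvex (hT : T.IsTree) {A B C : Set I}
    (hA : T.IsPathConvex A) (hB : T.IsPathConvex B) (hC : T.IsPathConvex C)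
    (hAB : (A ∩ B).Nonempty) (hBC : (B ∩ C).Nonempty) (hAC : (A ∩ C).Nonempty) :
    ((A ∩ C) ∩ (B ∩ C)).Nonempty := by
  classical
  obtain ⟨x, hxA, hxB⟩ := hAB
  obtain ⟨y, hyB, hyC⟩ := hBC
  obtain ⟨z, hzA, hzC⟩ := hAC
  obtain ⟨p, hp, -⟩ := hT.existsUnique_path x y
  obtain ⟨q, hq, -⟩ := hT.existsUnique_path x z
  obtain ⟨r, hr, -⟩ := hT.existsUnique_path z y
  have heq : p = (q.append r).bypass :=
    (hT.existsUnique_path x y).unique hp (Walk.bypass_isPath _)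
  obtain ⟨w, hw, hwA, hwC⟩ := p.exists_mem_support_inter hxA hyC fun u v huv => by
    rw [heq] at huv
    have huv' := (q.append r).edges_bypass_subset_edges huv
    rw [Walk.edges_append, List.mem_append] at huv'
    rcases huv' with h | h
    · exact Or.inl ⟨hA q hq hxA hzA _ (q.fst_mem_support_of_mem_edges h),
        hA q hq hxA hzA _ (q.snd_mem_support_of_mem_edges h)⟩
    · exact Or.inr ⟨hC r hr hzC hyC _ (r.fst_mem_support_of_mem_edges h),
        hC r hr hzC hyC _ (r.snd_mem_support_of_mem_edges h)⟩
  exact ⟨w, ⟨hwA, hwC⟩, hB p hp hxB hyB w hw, hwC⟩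

/-- The Helly property: finitely many pairwise intersecting path-convex sets of nodes of a tree
have a common element. -/
lemma IsTree.exists_mem_forall_of_isPathConvex (hT : T.IsTree) {ι : Type} (s : Finset ι)
    (F : ι → Set I) (hF : ∀ i ∈ s, T.IsPathConvex (F i))
    (hne : ∀ i ∈ s, ∀ j ∈ s, (F i ∩ F j).Nonempty) :
    ∃ x, ∀ i ∈ s, x ∈ F i := by
  classical
  induction s using Finset.induction_on generalizing F with
  | empty => exact ⟨hT.connected.nonempty.some, by simp⟩
  | insert a s ha ih =>
    simp only [Finset.mem_insert, forall_eq_or_imp] at hF hne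
    obtain ⟨x, hx⟩ := ih (fun i => F i ∩ F a) (fun i hi => (hF.2 i hi).inter hF.1)
      fun i hi j hj => hT.nonempty_inter_of_isPathConvex (hF.2 i hi) (hF.2 j hj) hF.1
        ((hne.2 i hi).2 j hj) ((hne.2 j hj).1) ((hne.2 i hi).1)
    rcases s.eq_empty_or_nonempty with rfl | ⟨b, hb⟩
    · obtain ⟨y, hy, -⟩ := hne.1.1
      exact ⟨y, by simpa using hy⟩
    · refine ⟨x, ?_⟩
      simp only [Finset.mem_insert, forall_eq_or_imp]
      exact ⟨(hx b hb).2, fun i hi => (hx i hi).1⟩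

end Helly

/-- The union of a finite chain of connected sets of vertices, consecutive ones intersecting,
is connected. -/
lemma connected_induce_iUnion_fin {I : Type} {T : SimpleGraph I} {n : ℕ} (f : Fin (n + 1) → Set I)
    (hf : ∀ a, (T.induce (f a)).Connected)
    (h : ∀ a b : Fin (n + 1), a.val + 1 = b.val → (f a ∩ f b).Nonempty) :
    (T.induce (⋃ a, f a)).Connected := by
  induction n with
  | zero =>
    have : ⋃ a, f a = f 0 := by ext; simp
    rw [this]
    exact hf 0
  | succ n ih =>
    have hU : ⋃ a, f a = (⋃ a : Fin (n + 1), f a.castSucc) ∪ f (Fin.last _) := by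
      ext x
      simp [Fin.exists_fin_succ']
    rw [hU]
    refine induce_union_connected
      (ih _ (fun a => hf _) fun a b hab => h _ _ (by simpa using hab)).preconnected
      (hf _).preconnected ?_
    obtain ⟨x, hx, hx'⟩ := h (Fin.last n).castSucc (Fin.last _) (by simp)
    exact ⟨x, Set.mem_iUnion.2 ⟨_, hx⟩, hx'⟩

end SimpleGraph

section HardwareGraph

variable {m : ℕ}

/-- The left vertex of the cell `(a, b)` of `F(m, 1)`. -/
abbrev leftVertex (a b : Fin m) : Fin m × Fin m × Fin (2 * 1) := (a, b, 0)

/-- The right vertex of the cell `(a, b)` of `F(m, 1)`. -/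
abbrev rightVertex (a b : Fin m) : Fin m × Fin m × Fin (2 * 1) := (a, b, 1)

lemma hardwareGraph_one_adj_cell (a b : Fin m) :
    (hardwareGraph m 1).Adj (leftVertex a b) (rightVertex a b) := by
  simp [hardwareGraph]

lemma hardwareGraph_one_adj_left {a a' : Fin m} (b : Fin m) (h : a.val + 1 = a'.val) :
    (hardwareGraph m 1).Adj (leftVertex a b) (leftVertex a' b) := by
  have hne : a ≠ a' := by rintro rfl; omega
  simp [hardwareGraph, h, hne]

lemma hardwareGraph_one_adj_right (a : Fin m) {b b' : Fin m} (h : b.val + 1 = b'.val) :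
    (hardwareGraph m 1).Adj (rightVertex a b) (rightVertex a b') := by
  have hne : b ≠ b' := by rintro rfl; omega
  simp [hardwareGraph, h, hne]

/-! ### The lower bound -/

section LowerBound

variable {n : ℕ} {I : Type} {T : SimpleGraph I}
  {B : I → Finset (Fin (n + 1) × Fin (n + 1) × Fin (2 * 1))}

/-- The nodes of a decomposition whose bag meets the column path `b`. -/
def columnNodes (B : I → Finset (Fin m × Fin m × Fin (2 * 1))) (b : Fin m) : Set I :=
  ⋃ a, {i | leftVertex a b ∈ B i}

/-- The nodes of a decomposition whose bag meets the row path `a`. -/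
def rowNodes (B : I → Finset (Fin m × Fin m × Fin (2 * 1))) (a : Fin m) : Set I :=
  ⋃ b, {i | rightVertex a b ∈ B i}

lemma mem_columnNodes {B : I → Finset (Fin m × Fin m × Fin (2 * 1))} {b : Fin m} {i : I} :
    i ∈ columnNodes B b ↔ ∃ a, leftVertex a b ∈ B i := by
  simp [columnNodes]

lemma mem_rowNodes {B : I → Finset (Fin m × Fin m × Fin (2 * 1))} {a : Fin m} {i : I} :
    i ∈ rowNodes B a ↔ ∃ b, rightVertex a b ∈ B i := by
  simp [rowNodes]

lemma IsTreeDecomp.connected_columnNodes (h : IsTreeDecomp (hardwareGraph (n + 1) 1) T B)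
    (b : Fin (n + 1)) : (T.induce (columnNodes B b)).Connected :=
  connected_induce_iUnion_fin _ (fun _ => h.2.2.2 _) fun _ _ hab =>
    h.2.2.1 _ _ (hardwareGraph_one_adj_left b hab)

lemma IsTreeDecomp.connected_rowNodes (h : IsTreeDecomp (hardwareGraph (n + 1) 1) T B)
    (a : Fin (n + 1)) : (T.induce (rowNodes B a)).Connected :=
  connected_induce_iUnion_fin _ (fun _ => h.2.2.2 _) fun _ _ hab =>
    h.2.2.1 _ _ (hardwareGraph_one_adj_right a hab)

lemma IsTreeDecomp.nonempty_rowNodes_inter_columnNodes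
    (h : IsTreeDecomp (hardwareGraph (n + 1) 1) T B) (a b : Fin (n + 1)) :
    (rowNodes B a ∩ columnNodes B b).Nonempty := by
  obtain ⟨i, hl, hr⟩ := h.2.2.1 _ _ (hardwareGraph_one_adj_cell a b)
  exact ⟨i, mem_rowNodes.2 ⟨b, hr⟩, mem_columnNodes.2 ⟨a, hl⟩⟩

/-- The node sets of a bramble of order `n + 2`: the crosses of the first `n` rows with the first
`n` columns, the last row and the last column. -/
def brambleNodes (B : I → Finset (Fin (n + 1) × Fin (n + 1) × Fin (2 * 1))) :
    (Fin n × Fin n) ⊕ Bool → Set I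
  | Sum.inl (a, b) => rowNodes B a.castSucc ∪ columnNodes B b.castSucc
  | Sum.inr true => rowNodes B (Fin.last n)
  | Sum.inr false => columnNodes B (Fin.last n)

lemma IsTreeDecomp.exists_mem_brambleNodes (h : IsTreeDecomp (hardwareGraph (n + 1) 1) T B) :
    ∃ i, ∀ j, i ∈ brambleNodes B j := by
  have hrc := h.nonempty_rowNodes_inter_columnNodes
  have hcr : ∀ a b, (columnNodes B b ∩ rowNodes B a).Nonempty := fun a b => by
    rw [Set.inter_comm]
    exact hrc a b
  have hconn : ∀ j, (T.induce (brambleNodes B j)).Connected := by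
    rintro (⟨a, b⟩ | _ | _)
    · exact induce_union_connected (h.connected_rowNodes _).preconnected
        (h.connected_columnNodes _).preconnected (hrc _ _)
    · exact h.connected_columnNodes _
    · exact h.connected_rowNodes _
  have hself : ∀ j, (brambleNodes B j ∩ brambleNodes B j).Nonempty := fun j => by
    rw [Set.inter_self]
    exact Set.nonempty_coe_sort.1 (hconn j).nonempty
  have hpair : ∀ j k, (brambleNodes B j ∩ brambleNodes B k).Nonempty := by
    rintro (⟨a, b⟩ | _ | _) (⟨a', b'⟩ | _ | _)
    · exact (hrc a.castSucc b'.castSucc).mono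
        (Set.inter_subset_inter Set.subset_union_left Set.subset_union_right)
    · exact (hrc a.castSucc _).mono (Set.inter_subset_inter_left _ Set.subset_union_left)
    · exact (hcr _ b.castSucc).mono (Set.inter_subset_inter_left _ Set.subset_union_right)
    · exact (hcr a'.castSucc _).mono (Set.inter_subset_inter_right _ Set.subset_union_left)
    · exact hself _
    · exact hcr _ _
    · exact (hrc _ b'.castSucc).mono (Set.inter_subset_inter_right _ Set.subset_union_right)
    · exact hrc _ _
    · exact hself _
  obtain ⟨i, hi⟩ := h.1.exists_mem_forall_of_isPathConvex Finset.univ (brambleNodes B)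
    (fun j _ => h.1.isAcyclic.isPathConvex (hconn j).preconnected) fun j _ k _ => hpair j k
  exact ⟨i, fun j => hi j (Finset.mem_univ j)⟩

lemma IsTreeDecomp.exists_le_card (h : IsTreeDecomp (hardwareGraph (n + 1) 1) T B) :
    ∃ i, n + 2 ≤ (B i).card := by
  obtain ⟨i, hi⟩ := h.exists_mem_brambleNodes
  refine ⟨i, ?_⟩
  have hrow : i ∈ rowNodes B (Fin.last n) := hi (Sum.inr true)
  have hcol : i ∈ columnNodes B (Fin.last n) := hi (Sum.inr false)
  have hcross : (∀ a, i ∈ rowNodes B a) ∨ (∀ b, i ∈ columnNodes B b) := by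
    by_contra! hcon
    obtain ⟨⟨a, ha⟩, b, hb⟩ := hcon
    induction a using Fin.lastCases with
    | last => exact ha hrow
    | cast a =>
      induction b using Fin.lastCases with
      | last => exact hb hcol
      | cast b => exact (hi (Sum.inl (a, b))).elim ha hb
  have hcard : Fintype.card (Option (Fin (n + 1))) = n + 2 := by simp
  rw [← hcard, ← Finset.card_univ]
  rcases hcross with hall | hall
  · obtain ⟨a, ha⟩ := mem_columnNodes.1 hcol
    choose f hf using fun a => mem_rowNodes.1 (hall a)
    refine Finset.card_le_card_of_injOn
      (fun o => o.elim (leftVertex a (Fin.last n)) fun a => rightVertex a (f a)) ?_ ?_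
    · rintro (_ | a') -
      exacts [ha, hf a']
    · rintro (_ | x) - (_ | y) - hxy <;> simp_all
  · obtain ⟨b, hb⟩ := mem_rowNodes.1 hrow
    choose f hf using fun b => mem_columnNodes.1 (hall b)
    refine Finset.card_le_card_of_injOn
      (fun o => o.elim (rightVertex (Fin.last n) b) fun b => leftVertex (f b) b) ?_ ?_
    · rintro (_ | b') -
      exacts [hb, hf b']
    · rintro (_ | x) - (_ | y) - hxy <;> simp_all

end LowerBound

/-! ### The upper bound -/

section UpperBound

/-- The parent function of the decomposition tree. The nodes `(a, b, false)` form the spine in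
lexicographic order; the nodes `(a, b, true)` form a leg attached at `(a, m - 1, false)`. -/
def decompParent (i : Fin m × Fin m × Bool) : Fin m × Fin m × Bool :=
  if 0 < i.2.1.val then (i.1, ⟨i.2.1.val - 1, (Nat.sub_le _ _).trans_lt i.2.1.isLt⟩, i.2.2)
  else if i.2.2 then (i.1, ⟨m - 1, Nat.sub_one_lt_of_lt i.1.isLt⟩, false)
  else if 0 < i.1.val then (⟨i.1.val - 1, (Nat.sub_le _ _).trans_lt i.1.isLt⟩,
    ⟨m - 1, Nat.sub_one_lt_of_lt i.1.isLt⟩, false)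
  else i

/-- A rank function decreasing towards the root of the decomposition tree. -/
def decompRank (i : Fin m × Fin m × Bool) : ℕ :=
  i.1.val * m + i.2.1.val + if i.2.2 then m else 0

/-- The bags of the decomposition. Along the spine the left vertices of row `a - 1` are replaced one
by one by those of row `a`; along the leg of row `a` the right vertices of that row are swept. -/
def decompBag (i : Fin m × Fin m × Bool) : Finset (Fin m × Fin m × Fin (2 * 1)) :=
  Finset.univ.filter fun v =>
    if i.2.2 then
      (v.2.2 = 0 ∧ v.1 = i.1 ∧ i.2.1 ≤ v.2.1) ∨
        (v.2.2 = 1 ∧ v.1 = i.1 ∧ (v.2.1 = i.2.1 ∨ v.2.1.val + 1 = i.2.1.val))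
    else
      v.2.2 = 0 ∧ ((v.1 = i.1 ∧ v.2.1 ≤ i.2.1) ∨ (v.1.val + 1 = i.1.val ∧ i.2.1 ≤ v.2.1))

lemma left_mem_decompBag_true {a b x y : Fin m} :
    leftVertex x y ∈ decompBag (a, b, true) ↔ x = a ∧ b ≤ y := by
  simp [decompBag]

lemma right_mem_decompBag_true {a b x y : Fin m} :
    rightVertex x y ∈ decompBag (a, b, true) ↔ x = a ∧ (y = b ∨ y.val + 1 = b.val) := by
  simp [decompBag]

lemma left_mem_decompBag_false {a b x y : Fin m} :
    leftVertex x y ∈ decompBag (a, b, false) ↔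
      (x = a ∧ y ≤ b) ∨ (x.val + 1 = a.val ∧ b ≤ y) := by
  simp [decompBag]

lemma right_notMem_decompBag_false {a b x y : Fin m} :
    rightVertex x y ∉ decompBag (a, b, false) := by
  simp [decompBag]

lemma decompRank_decompParent_lt {i : Fin m × Fin m × Bool}
    (h : 0 < i.1.val ∨ 0 < i.2.1.val ∨ i.2.2 = true) :
    decompRank (decompParent i) < decompRank i := by
  obtain ⟨⟨a, ha⟩, ⟨b, hb⟩, t⟩ := i
  unfold decompParent decompRank
  rcases Nat.eq_zero_or_pos b with rfl | hb0
  · cases t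
    · obtain ⟨a, rfl⟩ : ∃ c, a = c + 1 := ⟨a - 1, by simp at h; omega⟩
      simp [Nat.add_mul]
      omega
    · simp
      omega
  · simp [hb0]

/-- The node closest to the root whose bag contains a given vertex. -/
def decompTop (v : Fin m × Fin m × Fin (2 * 1)) : Fin m × Fin m × Bool :=
  (v.1, v.2.1, decide (v.2.2 = 1))

lemma vertex_cases {P : Fin m × Fin m × Fin (2 * 1) → Prop} (hl : ∀ a b, P (leftVertex a b))
    (hr : ∀ a b, P (rightVertex a b)) (v) : P v := by
  obtain ⟨a, b, d⟩ := v
  fin_cases d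
  exacts [hl a b, hr a b]

lemma mem_decompBag_decompTop (v : Fin m × Fin m × Fin (2 * 1)) :
    v ∈ decompBag (decompTop v) := by
  induction v using vertex_cases with
  | hl a b => exact left_mem_decompBag_false.2 (Or.inl ⟨rfl, le_rfl⟩)
  | hr a b => exact right_mem_decompBag_true.2 ⟨rfl, Or.inl rfl⟩

lemma mem_decompBag_decompParent {v : Fin m × Fin m × Fin (2 * 1)} {i : Fin m × Fin m × Bool}
    (h : v ∈ decompBag i) (hi : i ≠ decompTop v) :
    v ∈ decompBag (decompParent i) ∧ decompRank (decompParent i) < decompRank i := by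
  obtain ⟨a, b, t⟩ := i
  suffices hs : v ∈ decompBag (decompParent (a, b, t)) ∧ (0 < a.val ∨ 0 < b.val ∨ t = true) from
    ⟨hs.1, decompRank_decompParent_lt hs.2⟩
  unfold decompParent
  induction v using vertex_cases with
  | hl x y =>
    cases t
    · rw [left_mem_decompBag_false] at h
      have hi' : ¬ (a.val = x.val ∧ b.val = y.val) := fun he =>
        hi (by simp [decompTop, Fin.ext he.1, Fin.ext he.2])
      split_ifs <;> simp only [left_mem_decompBag_false, Fin.ext_iff, Fin.le_def] at * <;> grind
    · rw [left_mem_decompBag_true] at h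
      split_ifs <;>
        simp only [left_mem_decompBag_false, left_mem_decompBag_true, Fin.ext_iff, Fin.le_def] at *
        <;> grind
  | hr x y =>
    cases t
    · exact absurd h right_notMem_decompBag_false
    · rw [right_mem_decompBag_true] at h
      have hi' : ¬ (a.val = x.val ∧ b.val = y.val) := fun he =>
        hi (by simp [decompTop, Fin.ext he.1, Fin.ext he.2])
      split_ifs <;> simp only [right_mem_decompBag_true, Fin.ext_iff] at * <;> grind

lemma exists_mem_decompBag_of_adj {u v : Fin m × Fin m × Fin (2 * 1)}
    (h : (hardwareGraph m 1).Adj u v) : ∃ i, u ∈ decompBag i ∧ v ∈ decompBag i := by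
  wlog hrel : (u.1 = v.1 ∧ u.2.1 = v.2.1 ∧ u.2.2.val < 1 ∧ 1 ≤ v.2.2.val) ∨
    (u.2.1 = v.2.1 ∧ u.2.2 = v.2.2 ∧ u.2.2.val < 1 ∧ u.1.val + 1 = v.1.val) ∨
    (u.1 = v.1 ∧ u.2.2 = v.2.2 ∧ 1 ≤ u.2.2.val ∧ u.2.1.val + 1 = v.2.1.val) generalizing u v
  · obtain ⟨i, hv, hu⟩ := this h.symm ((((SimpleGraph.fromRel_adj _ _ _).1 h).2).resolve_left hrel)
    exact ⟨i, hu, hv⟩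
  refine ⟨decompTop v, ?_, mem_decompBag_decompTop v⟩
  clear h
  induction u using vertex_cases with
  | hl a b =>
    induction v using vertex_cases with
    | hl x y =>
      refine left_mem_decompBag_false.2 ?_
      simp at hrel
      exact Or.inr ⟨hrel.2, hrel.1.ge⟩
    | hr x y =>
      refine left_mem_decompBag_true.2 ?_
      simp at hrel
      exact ⟨hrel.1, hrel.2.ge⟩
  | hr a b =>
    induction v using vertex_cases with
    | hl x y => simp at hrel
    | hr x y =>
      refine right_mem_decompBag_true.2 ?_
      simp at hrel
      exact ⟨hrel.1, Or.inr hrel.2⟩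

lemma card_decompBag_le (i : Fin m × Fin m × Bool) : (decompBag i).card ≤ m + 1 := by
  obtain ⟨a, b, t⟩ := i
  rw [← Finset.card_range (m + 1)]
  cases t
  · refine Finset.card_le_card_of_injOn
      (fun v => if v.1 = a then v.2.1.val else v.2.1.val + 1) ?_ ?_
    · intro v _
      simp only [Finset.coe_range, Set.mem_Iio]
      split_ifs <;> omega
    · intro u hu v hv huv
      induction u using vertex_cases with
      | hr x y => exact absurd hu right_notMem_decompBag_false
      | hl x y =>
        induction v using vertex_cases with
        | hr x' y' => exact absurd hv right_notMem_decompBag_false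
        | hl x' y' =>
          replace hu := left_mem_decompBag_false.1 hu
          replace hv := left_mem_decompBag_false.1 hv
          simp only [Prod.mk.injEq, and_true, Fin.ext_iff, Fin.le_def] at *
          grind
  · refine Finset.card_le_card_of_injOn
      (fun v => if v.2.2 = 1 ∧ v.2.1 = b then m else v.2.1.val) ?_ ?_
    · intro v _
      simp only [Finset.coe_range, Set.mem_Iio]
      split_ifs <;> omega
    · intro u hu v hv huv
      induction u using vertex_cases with
      | hl x y =>
        replace hu := left_mem_decompBag_true.1 hu
        induction v using vertex_cases with
        | hl x' y' =>
          replace hv := left_mem_decompBag_true.1 hv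
          simp only [Prod.mk.injEq, Fin.ext_iff, Fin.le_def] at *
          grind
        | hr x' y' =>
          replace hv := right_mem_decompBag_true.1 hv
          simp only [Prod.mk.injEq, Fin.ext_iff, Fin.le_def] at *
          grind
      | hr x y =>
        replace hu := right_mem_decompBag_true.1 hu
        induction v using vertex_cases with
        | hl x' y' =>
          replace hv := left_mem_decompBag_true.1 hv
          simp only [Prod.mk.injEq, Fin.ext_iff, Fin.le_def] at *
          grind
        | hr x' y' =>
          replace hv := right_mem_decompBag_true.1 hv
          simp only [Prod.mk.injEq, Fin.ext_iff] at *
          grind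

lemma isTreeDecomp_decompBag (hm : 1 ≤ m) :
    IsTreeDecomp (hardwareGraph m 1) (parentGraph decompParent) decompBag := by
  refine ⟨isTree_parentGraph (ρ := decompRank) (r := (⟨0, hm⟩, ⟨0, hm⟩, false)) ?_ ?_,
    fun v => ⟨_, mem_decompBag_decompTop v⟩, fun _ _ => exists_mem_decompBag_of_adj,
    fun v => connected_induce_parentGraph (mem_decompBag_decompTop v)
      fun _ => mem_decompBag_decompParent⟩
  · simp [decompParent]
  · rintro ⟨a, b, t⟩ hne
    apply decompRank_decompParent_lt
    by_contra! hcon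
    simp only [nonpos_iff_eq_zero, ne_eq, Bool.not_eq_true] at hcon
    exact hne (by simp [Prod.ext_iff, Fin.ext_iff, hcon])

end UpperBound

end HardwareGraph

/-- For `m ≥ 1` and `c = 1`, the treewidth of the hardware graph `F(m, 1)`
equals exactly `m`. -/
theorem treewidth_hardwareGraph_c_one (m : ℕ) (hm : 1 ≤ m) :
    treewidth (hardwareGraph m 1) = m := by
  have hmem : ∃ (I : Type) (T : SimpleGraph I) (B : I → Finset (Fin m × Fin m × Fin (2 * 1))),
      IsTreeDecomp (hardwareGraph m 1) T B ∧ ∀ i : I, (B i).card ≤ m + 1 :=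
    ⟨_, _, _, isTreeDecomp_decompBag hm, card_decompBag_le⟩
  refine le_antisymm (Nat.sInf_le hmem) (le_csInf ⟨m, hmem⟩ ?_)
  rintro k ⟨I, T, B, hT, hk⟩
  obtain ⟨n, rfl⟩ : ∃ n, m = n + 1 := ⟨m - 1, by omega⟩
  obtain ⟨i, hi⟩ := hT.exists_le_card
  have := hk i
  omega
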